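/- Suppose (Ω_i, 𝒜_i) = (ℝ, ℬ(ℝ)) for all i = 1,…,n, and let c : ℝ^n → [0,∞] be Borel measurable. Let K_2 = {P ∈ M : (π_1,…,π_n) is a P-martingale}. If K_2 ≠ ∅, then K_2 is compact and there exists P ∈ K_2 such that P(c) = inf_{Q ∈ K_2} Q(c). -/

import Mathlib

open MeasureTheory Set ENNReal

namespace FATransport

variable {α : Type*} [MeasurableSpace α]

/-- The collection of measurable sets of `α` (the σ-field `𝒜`), as a type. -/
abbrev MSet (α : Type*) [MeasurableSpace α] := {A : Set α // MeasurableSet A}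

/-- A finitely additive probability on the σ-field of `α`, viewed as an element
of `[0,1]^𝒜`: it maps the whole space to `1` and is additive on disjoint pairs. -/
def IsFAP (P : MSet α → unitInterval) : Prop :=
  (P ⟨Set.univ, MeasurableSet.univ⟩ : ℝ) = 1 ∧
    ∀ A B : MSet α, Disjoint A.1 B.1 →
      (P ⟨A.1 ∪ B.1, A.2.union B.2⟩ : ℝ) = (P A : ℝ) + (P B : ℝ)

/-- `ℙ`, the set of all finitely additive probabilities on `𝒜`, as a subset of
`[0,1]^𝒜` (with its product topology). -/
def FAPs (α : Type*) [MeasurableSpace α] : Set (MSet α → unitInterval) :=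
  {P | IsFAP P}

/-- Integral of a simple function with respect to a finitely additive set function. -/
noncomputable def simpleInt (P : MSet α → unitInterval) (s : SimpleFunc α ℝ) : ℝ :=
  ∑ y ∈ s.range, y * (P ⟨(⇑s) ⁻¹' {y}, s.measurableSet_fiber y⟩ : ℝ)

/-- `P(f)` for a bounded measurable `f : α → ℝ`: the supremum of the integrals of
simple functions below `f` (for a f.a.p. `P` and bounded measurable `f` this agrees
with the integral defined by uniform approximation by simple functions). -/
noncomputable def fapInt (P : MSet α → unitInterval) (f : α → ℝ) : ℝ :=
  sSup (simpleInt P '' {s : SimpleFunc α ℝ | ∀ x, s x ≤ f x})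

/-- `P(c) = sup_k P(c ∧ k)` for a `[0,∞]`-valued `c`. -/
noncomputable def fapIntTop (P : MSet α → unitInterval) (c : α → ℝ≥0∞) : ℝ≥0∞ :=
  ⨆ k : ℕ, ENNReal.ofReal (fapInt P (fun x => (c x ⊓ (k : ℝ≥0∞)).toReal))

/-- A real-valued `f` is `P`-integrable iff `P(|f|) < ∞`. -/
def FapIntegrable (P : MSet α → unitInterval) (f : α → ℝ) : Prop :=
  fapIntTop P (fun x => ENNReal.ofReal |f x|) < ⊤

/-- `P(f) = P(f⁺) - P(f⁻)` for a (`P`-integrable) real-valued `f`. -/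
noncomputable def fapIntR (P : MSet α → unitInterval) (f : α → ℝ) : ℝ :=
  (fapIntTop P (fun x => ENNReal.ofReal (f x))).toReal -
    (fapIntTop P (fun x => ENNReal.ofReal (-f x))).toReal

/-- `P ≪ Q` for finitely additive probabilities. -/
def FapAC (P Q : MSet α → unitInterval) : Prop :=
  ∀ A : MSet α, (Q A : ℝ) = 0 → (P A : ℝ) = 0

variable {n : ℕ} {Ω : Fin n → Type*} [∀ i, MeasurableSpace (Ω i)]

/-- `M`, the set of finitely additive probabilities on `𝒜 = ⊗ᵢ 𝒜ᵢ` whose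
`i`-th marginal is `μ i` for every `i`. -/
def couplings (μ : ∀ i, Measure (Ω i)) : Set (MSet (∀ i, Ω i) → unitInterval) :=
  {P | IsFAP P ∧ ∀ (i : Fin n) (B : Set (Ω i)) (hB : MeasurableSet B),
    (P ⟨(fun ω => ω i) ⁻¹' B, (measurable_pi_apply i) hB⟩ : ℝ) = (μ i B).toReal}

end FATransport

namespace FATransport

/-- `(π_1, …, π_n)` is a `P`-martingale for a finitely additive probability `P` on
`ℬ(ℝⁿ)`: each `P(|π_i|) < ∞`, `P(π_1) = 0`, and `P((π_{i+1} - π_i) g(π_1,…,π_i)) = 0`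
for every bounded Borel `g` (encoded as a bounded Borel function on `ℝⁿ` depending
only on the first `i` coordinates). -/
def IsMartFAP {n : ℕ} (hn : 0 < n) (P : MSet (Fin n → ℝ) → unitInterval) : Prop :=
  (∀ i : Fin n, fapIntTop P (fun ω => ENNReal.ofReal |ω i|) < ⊤) ∧
    fapIntR P (fun ω => ω ⟨0, hn⟩) = 0 ∧
    ∀ i j : Fin n, (j : ℕ) = (i : ℕ) + 1 →
      ∀ g : (Fin n → ℝ) → ℝ, Measurable g → (∃ C, ∀ x, |g x| ≤ C) →
        (∀ x y : Fin n → ℝ, (∀ k : Fin n, k ≤ i → x k = y k) → g x = g y) →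
        fapIntR P (fun ω => (ω j - ω i) * g ω) = 0

end FATransport

/-!
By Tychonoff's theorem `[0,1]^𝒜` is compact, so everything reduces to semicontinuity of
`P ↦ P(f)`. It is continuous for bounded `f` (a uniform limit of finite sums of evaluations), hence
lower semicontinuous for `f : Ω → [0,∞]`, and this yields a minimiser on any nonempty compact set.

The martingale constraints involve unbounded integrands `f`, but `|f| ≤ w` where `w` is a sum of
functions of one coordinate, so `P ↦ P(w)` is constant and finite on the couplings. Then `P(f⁺)` and
`P(w - f⁺)` are lower semicontinuous with constant sum, so both are continuous; likewise for `f⁻`.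
The martingale couplings are therefore closed.
-/

namespace FATransport

lemma continuousOn_of_lowerSemicontinuousOn_of_continuousOn_add {X : Type*} [TopologicalSpace X]
    {S : Set X} {F G : X → ℝ≥0∞} (hF : LowerSemicontinuousOn F S) (hG : LowerSemicontinuousOn G S)
    (hFG : ContinuousOn (fun x => F x + G x) S) (hGtop : ∀ x ∈ S, G x ≠ ⊤) :
    ContinuousOn F S := by
  intro x hx
  refine tendsto_order.2 ⟨hF x hx, fun t hFt => ?_⟩
  obtain ⟨m, hFGm, hmt⟩ : ∃ m, F x + G x < m ∧ m < t + G x :=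
    exists_between (ENNReal.add_lt_add_right (hGtop x hx) hFt)
  have htG : LowerSemicontinuousOn (fun y => t + G y) S :=
    lowerSemicontinuousOn_const.add hG
  filter_upwards [(hFG x hx).eventually_lt_const hFGm, htG x hx m hmt] with y hFGy hmy
  exact lt_of_add_lt_add_right (hFGy.trans hmy)

section SimpleFunctions

variable {α : Type*} [MeasurableSpace α] {P : MSet α → unitInterval}

open scoped Classical in
/-- The set function `P` as a family of scalar multiplications on `ℝ`, extended by `0` to
nonmeasurable sets; it makes `simpleInt P` an instance of Mathlib's `SimpleFunc.setToSimpleFunc`. -/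
noncomputable def smulOperator (P : MSet α → unitInterval) (A : Set α) : ℝ →L[ℝ] ℝ :=
  if hA : MeasurableSet A then (P ⟨A, hA⟩ : ℝ) • ContinuousLinearMap.id ℝ ℝ else 0

lemma smulOperator_of_measurableSet (P : MSet α → unitInterval) {A : Set α}
    (hA : MeasurableSet A) :
    smulOperator P A = (P ⟨A, hA⟩ : ℝ) • ContinuousLinearMap.id ℝ ℝ :=
  dif_pos hA

lemma simpleInt_eq_setToSimpleFunc (P : MSet α → unitInterval) (s : SimpleFunc α ℝ) :
    simpleInt P s = s.setToSimpleFunc (smulOperator P) := by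
  refine Finset.sum_congr rfl fun y _ => ?_
  simp [smulOperator_of_measurableSet P (s.measurableSet_fiber y), mul_comm]

-- With the zero measure as reference, every simple function counts as integrable.
lemma IsFAP.finMeasAdditive_smulOperator (hP : IsFAP P) :
    FinMeasAdditive (0 : Measure α) (smulOperator P) := by
  intro A B hA hB _ _ hAB
  rw [smulOperator_of_measurableSet P hA, smulOperator_of_measurableSet P hB,
    smulOperator_of_measurableSet P (hA.union hB), hP.2 ⟨A, hA⟩ ⟨B, hB⟩ hAB, add_smul]

lemma simpleInt_add (hP : IsFAP P) (s t : SimpleFunc α ℝ) :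
    simpleInt P (s + t) = simpleInt P s + simpleInt P t := by
  simp only [simpleInt_eq_setToSimpleFunc]
  exact SimpleFunc.setToSimpleFunc_add _ hP.finMeasAdditive_smulOperator
    integrable_zero_measure integrable_zero_measure

lemma simpleInt_mono (hP : IsFAP P) {s t : SimpleFunc α ℝ} (hst : s ≤ t) :
    simpleInt P s ≤ simpleInt P t := by
  simp only [simpleInt_eq_setToSimpleFunc]
  refine SimpleFunc.setToSimpleFunc_mono hP.finMeasAdditive_smulOperator
    (fun A hA _ x hx => ?_) integrable_zero_measure integrable_zero_measure hst
  rw [smulOperator_of_measurableSet P hA]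
  exact mul_nonneg (P ⟨A, hA⟩).2.1 hx

lemma simpleInt_const (hP : IsFAP P) (a : ℝ) : simpleInt P (SimpleFunc.const α a) = a := by
  rw [simpleInt_eq_setToSimpleFunc, SimpleFunc.setToSimpleFunc_const _
    hP.finMeasAdditive_smulOperator.map_empty_eq_zero,
    smulOperator_of_measurableSet P MeasurableSet.univ, hP.1]
  simp

lemma simpleInt_le_add_of_le_add (hP : IsFAP P) {s t : SimpleFunc α ℝ} {ε : ℝ}
    (hst : ∀ x, s x ≤ t x + ε) : simpleInt P s ≤ simpleInt P t + ε :=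
  calc simpleInt P s ≤ simpleInt P (t + SimpleFunc.const α ε) := simpleInt_mono hP hst
    _ = simpleInt P t + ε := by rw [simpleInt_add hP, simpleInt_const hP]

lemma continuous_simpleInt (s : SimpleFunc α ℝ) :
    Continuous fun P : MSet α → unitInterval => simpleInt P s := by
  unfold simpleInt
  fun_prop

end SimpleFunctions

section BoundedFunctions

variable {α : Type*} [MeasurableSpace α] {P : MSet α → unitInterval} {f g : α → ℝ}

/-- Bounded measurable real functions, the natural domain of the integral `fapInt`. -/
structure IsBddMeasurable (f : α → ℝ) : Prop where
  measurable : Measurable f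
  exists_bound : ∃ C, ∀ x, |f x| ≤ C

lemma isBddMeasurable_const (a : ℝ) : IsBddMeasurable fun _ : α => a :=
  ⟨measurable_const, |a|, fun _ => le_rfl⟩

lemma IsBddMeasurable.add (hf : IsBddMeasurable f) (hg : IsBddMeasurable g) :
    IsBddMeasurable fun x => f x + g x := by
  obtain ⟨C, hC⟩ := hf.exists_bound
  obtain ⟨D, hD⟩ := hg.exists_bound
  exact ⟨hf.measurable.add hg.measurable, C + D,
    fun x => (abs_add_le _ _).trans (add_le_add (hC x) (hD x))⟩

lemma IsBddMeasurable.exists_simpleFunc_abs_sub_le (hf : IsBddMeasurable f) {ε : ℝ} (hε : 0 < ε) :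
    ∃ s : SimpleFunc α ℝ, ∀ x, |f x - s x| ≤ ε := by
  obtain ⟨C, hC⟩ := hf.exists_bound
  have hfloor : Measurable fun x => ⌊f x / ε⌋ := (hf.measurable.div_const ε).floor
  have hrange : (range fun x => ⌊f x / ε⌋).Finite := by
    refine (finite_Icc ⌊-C / ε⌋ ⌊C / ε⌋).subset (range_subset_iff.2 fun x => ?_)
    obtain ⟨hlow, hupp⟩ := abs_le.1 (hC x)
    exact ⟨by gcongr, by gcongr⟩
  let k : SimpleFunc α ℤ := ⟨_, fun m => hfloor (measurableSet_singleton m), hrange⟩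
  refine ⟨k.map fun m : ℤ => ε * (m : ℝ), fun x => ?_⟩
  have hfract : f x - ε * ⌊f x / ε⌋ = ε * Int.fract (f x / ε) := by
    rw [Int.fract, mul_sub, mul_div_cancel₀ _ hε.ne']
  change |f x - ε * ⌊f x / ε⌋| ≤ ε
  rw [hfract, abs_of_nonneg (mul_nonneg hε.le (Int.fract_nonneg _))]
  exact mul_le_of_le_one_right hε.le (Int.fract_lt_one _).le

lemma abs_fapInt_sub_simpleInt_le (hP : IsFAP P) {s : SimpleFunc α ℝ} {ε : ℝ}
    (hfs : ∀ x, |f x - s x| ≤ ε) : |fapInt P f - simpleInt P s| ≤ ε := by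
  have hupper : simpleInt P s + ε ∈ upperBounds (simpleInt P '' {t | ∀ x, t x ≤ f x}) := by
    rintro _ ⟨t, htf, rfl⟩
    exact simpleInt_le_add_of_le_add hP fun x => by linarith [abs_le.1 (hfs x), htf x]
  have hmem : simpleInt P (s + SimpleFunc.const α (-ε)) ∈
      simpleInt P '' {t | ∀ x, t x ≤ f x} := by
    refine mem_image_of_mem _ fun x => ?_
    change s x + -ε ≤ f x
    linarith [abs_le.1 (hfs x)]
  have hle : fapInt P f ≤ simpleInt P s + ε := csSup_le ⟨_, hmem⟩ hupper
  have hge : simpleInt P s + -ε ≤ fapInt P f := by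
    rw [← simpleInt_const hP (-ε), ← simpleInt_add hP]
    exact le_csSup ⟨_, hupper⟩ hmem
  exact abs_le.2 ⟨by linarith, by linarith⟩

lemma fapInt_const (hP : IsFAP P) (a : ℝ) : fapInt P (fun _ => a) = a := by
  have h : |fapInt P (fun _ => a) - simpleInt P (SimpleFunc.const α a)| ≤ 0 :=
    abs_fapInt_sub_simpleInt_le hP fun x => by simp
  rwa [simpleInt_const hP, abs_nonpos_iff, sub_eq_zero] at h

lemma fapInt_add (hP : IsFAP P) (hf : IsBddMeasurable f) (hg : IsBddMeasurable g) :
    fapInt P (fun x => f x + g x) = fapInt P f + fapInt P g := by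
  refine eq_of_abs_sub_le_all fun ε hε => ?_
  obtain ⟨s, hs⟩ := hf.exists_simpleFunc_abs_sub_le (show 0 < ε / 4 by positivity)
  obtain ⟨t, ht⟩ := hg.exists_simpleFunc_abs_sub_le (show 0 < ε / 4 by positivity)
  have hst : ∀ x, |f x + g x - (s + t) x| ≤ ε / 4 + ε / 4 := fun x => by
    rw [SimpleFunc.coe_add, Pi.add_apply, add_sub_add_comm]
    exact (abs_add_le _ _).trans (add_le_add (hs x) (ht x))
  have hfs := abs_le.1 (abs_fapInt_sub_simpleInt_le hP hs)
  have hgt := abs_le.1 (abs_fapInt_sub_simpleInt_le hP ht)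
  have hfgst := abs_le.1 (abs_fapInt_sub_simpleInt_le hP hst)
  rw [simpleInt_add hP] at hfgst
  exact abs_le.2 ⟨by linarith, by linarith⟩

lemma fapInt_mono (hP : IsFAP P) (hf : IsBddMeasurable f) (hg : IsBddMeasurable g) (hfg : f ≤ g) :
    fapInt P f ≤ fapInt P g := by
  obtain ⟨C, hC⟩ := hf.exists_bound
  obtain ⟨D, hD⟩ := hg.exists_bound
  refine csSup_le_csSup ⟨D, ?_⟩ ⟨_, SimpleFunc.const α (-C), fun x => (abs_le.1 (hC x)).1, rfl⟩
    (image_mono fun s hs x => (hs x).trans (hfg x))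
  rintro _ ⟨s, hs, rfl⟩
  rw [← simpleInt_const hP D]
  exact simpleInt_mono hP fun x => (hs x).trans (abs_le.1 (hD x)).2

lemma fapInt_nonneg (hP : IsFAP P) (hf : IsBddMeasurable f) (hf0 : 0 ≤ f) : 0 ≤ fapInt P f :=
  calc 0 = fapInt P fun _ => 0 := (fapInt_const hP 0).symm
    _ ≤ fapInt P f := fapInt_mono hP (isBddMeasurable_const 0) hf hf0

lemma continuousOn_fapInt (hf : IsBddMeasurable f) :
    ContinuousOn (fun P => fapInt P f) (FAPs α) := by
  refine continuousOn_of_uniform_approx_of_continuousOn fun u hu => ?_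
  obtain ⟨ε, hε, hεu⟩ := Metric.mem_uniformity_dist.1 hu
  obtain ⟨s, hs⟩ := hf.exists_simpleFunc_abs_sub_le (half_pos hε)
  refine ⟨fun P => simpleInt P s, (continuous_simpleInt s).continuousOn, fun P hP => hεu ?_⟩
  rw [Real.dist_eq]
  exact (abs_fapInt_sub_simpleInt_le hP hs).trans_lt (half_lt_self hε)

lemma fapInt_comp_congr {β : Type*} [MeasurableSpace β] {P Q : MSet α → unitInterval}
    (hP : IsFAP P) (hQ : IsFAP Q) {φ : α → β} (hφ : Measurable φ)
    (hPQ : ∀ B : MSet β, P ⟨φ ⁻¹' B, hφ B.2⟩ = Q ⟨φ ⁻¹' B, hφ B.2⟩)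
    {f : β → ℝ} (hf : IsBddMeasurable f) :
    fapInt P (fun x => f (φ x)) = fapInt Q (fun x => f (φ x)) := by
  refine eq_of_abs_sub_le_all fun ε hε => ?_
  obtain ⟨s, hs⟩ := hf.exists_simpleFunc_abs_sub_le (half_pos hε)
  have hsφ : ∀ x, |f (φ x) - s.comp φ hφ x| ≤ ε / 2 := fun x => hs (φ x)
  have hsimple : simpleInt P (s.comp φ hφ) = simpleInt Q (s.comp φ hφ) :=
    Finset.sum_congr rfl fun y _ =>
      congrArg (fun p : unitInterval => y * (p : ℝ)) (hPQ ⟨s ⁻¹' {y}, s.measurableSet_fiber y⟩)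
  have hPs := abs_le.1 (abs_fapInt_sub_simpleInt_le hP hsφ)
  have hQs := abs_le.1 (abs_fapInt_sub_simpleInt_le hQ hsφ)
  exact abs_le.2 ⟨by linarith, by linarith⟩

end BoundedFunctions

section Truncation

variable {α : Type*} {c d : α → ℝ≥0∞}

/-- The real-valued truncation `c ∧ k`, in the form in which it enters `fapIntTop`. -/
noncomputable def truncate (c : α → ℝ≥0∞) (k : ℕ) (x : α) : ℝ :=
  (c x ⊓ (k : ℝ≥0∞)).toReal

lemma inf_natCast_ne_top (a : ℝ≥0∞) (k : ℕ) : a ⊓ (k : ℝ≥0∞) ≠ ⊤ :=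
  ne_top_of_le_ne_top (ENNReal.natCast_ne_top k) inf_le_right

lemma truncate_mono (hcd : c ≤ d) {k l : ℕ} (hkl : k ≤ l) : truncate c k ≤ truncate d l :=
  fun x => ENNReal.toReal_mono (inf_natCast_ne_top _ _)
    (inf_le_inf (hcd x) (by exact_mod_cast hkl))

lemma truncate_add_le (c d : α → ℝ≥0∞) (k : ℕ) (x : α) :
    truncate (c + d) k x ≤ truncate c k x + truncate d k x := by
  unfold truncate
  rw [← ENNReal.toReal_add (inf_natCast_ne_top _ _) (inf_natCast_ne_top _ _)]
  refine ENNReal.toReal_mono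
    (ENNReal.add_ne_top.2 ⟨inf_natCast_ne_top _ _, inf_natCast_ne_top _ _⟩) ?_
  rw [Pi.add_apply, inf_comm, inf_comm (c x), inf_comm (d x)]
  exact (min_add_distrib _ _ _).trans_le inf_le_right

lemma truncate_add_truncate_le (c d : α → ℝ≥0∞) (k : ℕ) (x : α) :
    truncate c k x + truncate d k x ≤ truncate (c + d) (k + k) x := by
  unfold truncate
  rw [← ENNReal.toReal_add (inf_natCast_ne_top _ _) (inf_natCast_ne_top _ _)]
  refine ENNReal.toReal_mono (inf_natCast_ne_top _ _) ?_
  rw [Nat.cast_add]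
  exact le_inf (add_le_add inf_le_left inf_le_left) (add_le_add inf_le_right inf_le_right)

lemma isBddMeasurable_truncate [MeasurableSpace α] (hc : Measurable c) (k : ℕ) :
    IsBddMeasurable (truncate c k) := by
  refine ⟨(hc.inf measurable_const).ennreal_toReal, k, fun x => ?_⟩
  rw [truncate, abs_of_nonneg ENNReal.toReal_nonneg]
  exact ENNReal.toReal_le_of_le_ofReal k.cast_nonneg
    (by rw [ENNReal.ofReal_natCast]; exact inf_le_right)

end Truncation

section NonnegativeFunctions

variable {α : Type*} [MeasurableSpace α] {P : MSet α → unitInterval} {c d : α → ℝ≥0∞}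

lemma fapIntTop_eq_iSup_truncate (P : MSet α → unitInterval) (c : α → ℝ≥0∞) :
    fapIntTop P c = ⨆ k : ℕ, ENNReal.ofReal (fapInt P (truncate c k)) :=
  rfl

lemma monotone_ofReal_fapInt_truncate (hP : IsFAP P) (hc : Measurable c) :
    Monotone fun k : ℕ => ENNReal.ofReal (fapInt P (truncate c k)) :=
  fun k l hkl => ENNReal.ofReal_le_ofReal <|
    fapInt_mono hP (isBddMeasurable_truncate hc k) (isBddMeasurable_truncate hc l)
      (truncate_mono le_rfl hkl)

lemma fapIntTop_mono (hP : IsFAP P) (hc : Measurable c) (hd : Measurable d) (hcd : c ≤ d) :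
    fapIntTop P c ≤ fapIntTop P d :=
  iSup_mono fun k => ENNReal.ofReal_le_ofReal <|
    fapInt_mono hP (isBddMeasurable_truncate hc k) (isBddMeasurable_truncate hd k)
      (truncate_mono hcd le_rfl)

lemma fapIntTop_zero (hP : IsFAP P) : fapIntTop P 0 = 0 := by
  simp [fapIntTop, fapInt_const hP]

lemma fapIntTop_add (hP : IsFAP P) (hc : Measurable c) (hd : Measurable d) :
    fapIntTop P (c + d) = fapIntTop P c + fapIntTop P d := by
  have hsum (k : ℕ) : ENNReal.ofReal (fapInt P (truncate c k)) +
      ENNReal.ofReal (fapInt P (truncate d k)) =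
      ENNReal.ofReal (fapInt P fun x => truncate c k x + truncate d k x) := by
    rw [fapInt_add hP (isBddMeasurable_truncate hc k) (isBddMeasurable_truncate hd k),
      ENNReal.ofReal_add] <;>
    exact fapInt_nonneg hP (isBddMeasurable_truncate ‹_› k) fun _ => ENNReal.toReal_nonneg
  have hbdd (k : ℕ) : IsBddMeasurable fun x => truncate c k x + truncate d k x :=
    (isBddMeasurable_truncate hc k).add (isBddMeasurable_truncate hd k)
  simp only [fapIntTop_eq_iSup_truncate]
  rw [ENNReal.iSup_add_iSup_of_monotone (monotone_ofReal_fapInt_truncate hP hc)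
    (monotone_ofReal_fapInt_truncate hP hd)]
  simp only [hsum]
  apply le_antisymm
  · exact iSup_mono fun k => ENNReal.ofReal_le_ofReal <|
      fapInt_mono hP (isBddMeasurable_truncate (hc.add hd) k) (hbdd k) (truncate_add_le c d k)
  · exact iSup_le fun k => le_iSup_of_le (k + k) <| ENNReal.ofReal_le_ofReal <|
      fapInt_mono hP (hbdd k) (isBddMeasurable_truncate (hc.add hd) _)
        (truncate_add_truncate_le c d k)

lemma fapIntTop_sum (hP : IsFAP P) {ι : Type*} (s : Finset ι) {c : ι → α → ℝ≥0∞}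
    (hc : ∀ i ∈ s, Measurable (c i)) :
    fapIntTop P (fun x => ∑ i ∈ s, c i x) = ∑ i ∈ s, fapIntTop P (c i) := by
  classical
  induction s using Finset.induction_on with
  | empty => exact fapIntTop_zero hP
  | insert i s his ih =>
    rw [Finset.forall_mem_insert] at hc
    simp only [Finset.sum_insert his]
    rw [← ih hc.2]
    exact fapIntTop_add hP hc.1 (Finset.measurable_sum s hc.2)

lemma fapIntTop_nsmul (hP : IsFAP P) (hc : Measurable c) (N : ℕ) :
    fapIntTop P (N • c) = N • fapIntTop P c := by
  simpa only [Finset.sum_const, Finset.card_range] using!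
    fapIntTop_sum hP (Finset.range N) (c := fun _ => c) fun _ _ => hc

lemma fapIntTop_comp_congr {β : Type*} [MeasurableSpace β] {P Q : MSet α → unitInterval}
    (hP : IsFAP P) (hQ : IsFAP Q) {φ : α → β} (hφ : Measurable φ)
    (hPQ : ∀ B : MSet β, P ⟨φ ⁻¹' B, hφ B.2⟩ = Q ⟨φ ⁻¹' B, hφ B.2⟩)
    {c : β → ℝ≥0∞} (hc : Measurable c) :
    fapIntTop P (fun x => c (φ x)) = fapIntTop Q (fun x => c (φ x)) :=
  iSup_congr fun k => congrArg ENNReal.ofReal <|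
    fapInt_comp_congr hP hQ hφ hPQ (isBddMeasurable_truncate hc k)

lemma lowerSemicontinuousOn_fapIntTop (hc : Measurable c) :
    LowerSemicontinuousOn (fun P => fapIntTop P c) (FAPs α) :=
  lowerSemicontinuousOn_iSup fun k => ContinuousOn.lowerSemicontinuousOn <|
    ENNReal.continuous_ofReal.comp_continuousOn <|
      continuousOn_fapInt (isBddMeasurable_truncate hc k)

lemma exists_fapIntTop_eq_iInf {K : Set (MSet α → unitInterval)} (hK : IsCompact K)
    (hne : K.Nonempty) (hKF : K ⊆ FAPs α) (hc : Measurable c) :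
    ∃ P ∈ K, fapIntTop P c = ⨅ Q ∈ K, fapIntTop Q c := by
  obtain ⟨P, hPK, hPmin⟩ :=
    ((lowerSemicontinuousOn_fapIntTop hc).mono hKF).exists_isMinOn hne hK
  exact ⟨P, hPK, le_antisymm (le_iInf₂ fun Q hQ => hPmin hQ) (iInf₂_le P hPK)⟩

end NonnegativeFunctions

section DominatedFunctions

variable {α : Type*} [MeasurableSpace α] {S : Set (MSet α → unitInterval)} {w : α → ℝ≥0∞}

lemma continuousOn_fapIntTop_of_le (hS : S ⊆ FAPs α) {h : α → ℝ≥0∞} (hh : Measurable h)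
    (hw : Measurable w) (hhw : h ≤ w) (hcont : ContinuousOn (fun P => fapIntTop P w) S)
    (hfin : ∀ P ∈ S, fapIntTop P w ≠ ⊤) :
    ContinuousOn (fun P => fapIntTop P h) S := by
  have hwh : Measurable (w - h) := hw.sub hh
  refine continuousOn_of_lowerSemicontinuousOn_of_continuousOn_add
    (G := fun P => fapIntTop P (w - h))
    ((lowerSemicontinuousOn_fapIntTop hh).mono hS) ((lowerSemicontinuousOn_fapIntTop hwh).mono hS)
    (hcont.congr fun P hP => ?_) fun P hP => ?_
  · rw [← fapIntTop_add (hS hP) hh hwh, add_tsub_cancel_of_le hhw]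
  · exact ne_top_of_le_ne_top (hfin P hP) (fapIntTop_mono (hS hP) hwh hw tsub_le_self)

lemma continuousOn_fapIntR_of_abs_le (hS : S ⊆ FAPs α) {f : α → ℝ} (hf : Measurable f)
    (hw : Measurable w) (hfw : ∀ x, ENNReal.ofReal |f x| ≤ w x)
    (hcont : ContinuousOn (fun P => fapIntTop P w) S) (hfin : ∀ P ∈ S, fapIntTop P w ≠ ⊤) :
    ContinuousOn (fun P => fapIntR P f) S := by
  have htoReal {h : α → ℝ≥0∞} (hh : Measurable h) (hhw : h ≤ w) :
      ContinuousOn (fun P => (fapIntTop P h).toReal) S :=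
    ENNReal.continuousOn_toReal.comp (continuousOn_fapIntTop_of_le hS hh hw hhw hcont hfin)
      fun P hP => ne_top_of_le_ne_top (hfin P hP) (fapIntTop_mono (hS hP) hh hw hhw)
  exact (htoReal hf.ennreal_ofReal fun x =>
      (ENNReal.ofReal_le_ofReal (le_abs_self _)).trans (hfw x)).sub
    (htoReal hf.neg.ennreal_ofReal fun x =>
      (ENNReal.ofReal_le_ofReal (neg_le_abs _)).trans (hfw x))

end DominatedFunctions

section Couplings

lemma isClosed_FAPs (α : Type*) [MeasurableSpace α] : IsClosed (FAPs α) := by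
  simp only [FAPs, IsFAP, ofPred_and, ofPred_forall]
  exact (isClosed_eq (by fun_prop) continuous_const).inter <|
    isClosed_iInter fun A => isClosed_iInter fun B => isClosed_iInter fun _ =>
      isClosed_eq (by fun_prop) (by fun_prop)

variable {n : ℕ} {Ω : Fin n → Type*} [∀ i, MeasurableSpace (Ω i)] {μ : ∀ i, Measure (Ω i)}

lemma couplings_subset_FAPs : couplings μ ⊆ FAPs (∀ i, Ω i) :=
  fun _ hP => hP.1

lemma isClosed_couplings (μ : ∀ i, Measure (Ω i)) : IsClosed (couplings μ) := by
  simp only [couplings, ofPred_and, ofPred_forall]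
  exact (isClosed_FAPs _).inter <|
    isClosed_iInter fun i => isClosed_iInter fun B => isClosed_iInter fun _ =>
      isClosed_eq (by fun_prop) continuous_const

lemma fapIntTop_marginal_congr {P Q : MSet (∀ i, Ω i) → unitInterval} (hP : P ∈ couplings μ)
    (hQ : Q ∈ couplings μ) (i : Fin n) {f : Ω i → ℝ≥0∞} (hf : Measurable f) :
    fapIntTop P (fun ω => f (ω i)) = fapIntTop Q (fun ω => f (ω i)) :=
  fapIntTop_comp_congr hP.1 hQ.1 (measurable_pi_apply i)
    (fun B => Subtype.ext ((hP.2 i B B.2).trans (hQ.2 i B B.2).symm)) hf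

lemma continuousOn_fapIntTop_marginal (i : Fin n) {f : Ω i → ℝ≥0∞} (hf : Measurable f) :
    ContinuousOn (fun P => fapIntTop P fun ω => f (ω i)) (couplings μ) :=
  fun _ hP => continuousWithinAt_const.congr
    (fun _ hQ => fapIntTop_marginal_congr hQ hP i hf) rfl

lemma continuousOn_fapIntR_of_abs_le_sum {f : (∀ i, Ω i) → ℝ} (hf : Measurable f)
    {w : ∀ i, Ω i → ℝ≥0∞} (hw : ∀ i, Measurable (w i))
    (hfw : ∀ ω, ENNReal.ofReal |f ω| ≤ ∑ i, w i (ω i))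
    (hfin : ∀ P ∈ couplings μ, ∀ i, fapIntTop P (fun ω => w i (ω i)) ≠ ⊤) :
    ContinuousOn (fun P => fapIntR P f) (couplings μ) := by
  have hwi (i : Fin n) : Measurable fun ω : ∀ i, Ω i => w i (ω i) :=
    (hw i).comp (measurable_pi_apply i)
  have hsum {P} (hP : P ∈ couplings μ) : fapIntTop P (fun ω => ∑ i, w i (ω i)) =
      ∑ i, fapIntTop P fun ω => w i (ω i) :=
    fapIntTop_sum hP.1 _ fun i _ => hwi i
  refine continuousOn_fapIntR_of_abs_le couplings_subset_FAPs hf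
    (Finset.measurable_sum Finset.univ fun i _ => hwi i) hfw ?_ fun P hP => ?_
  · exact (continuousOn_finsetSum _ fun i _ => continuousOn_fapIntTop_marginal i (hw i)).congr
      fun P hP => hsum hP
  · rw [hsum hP]
    exact ENNReal.sum_ne_top.2 fun i _ => hfin P hP i

end Couplings

section MartingaleCouplings

variable {n : ℕ} {μ : Fin n → Measure ℝ}

lemma ofReal_mul_norm_le_sum {ι : Type*} [Fintype ι] (N : ℕ) (x : ι → ℝ) :
    ENNReal.ofReal (N * ‖x‖) ≤ ∑ i, N • ENNReal.ofReal |x i| := by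
  have hnorm : ‖x‖ ≤ ∑ i, |x i| :=
    (pi_norm_le_iff_of_nonneg (Finset.sum_nonneg fun i _ => abs_nonneg _)).2 fun i =>
      Finset.single_le_sum (f := fun j => |x j|) (fun j _ => abs_nonneg _) (Finset.mem_univ i)
  calc ENNReal.ofReal (N * ‖x‖) = N • ENNReal.ofReal ‖x‖ := by
        rw [ENNReal.ofReal_mul N.cast_nonneg, ENNReal.ofReal_natCast, nsmul_eq_mul]
    _ ≤ N • ENNReal.ofReal (∑ i, |x i|) := by gcongr
    _ = ∑ i, N • ENNReal.ofReal |x i| := by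
        rw [ENNReal.ofReal_sum_of_nonneg fun i _ => abs_nonneg _, Finset.smul_sum]

lemma continuousOn_fapIntR_of_linear_growth
    (hfin : ∀ P ∈ couplings μ, ∀ i, fapIntTop P (fun ω => ENNReal.ofReal |ω i|) < ⊤)
    {f : (Fin n → ℝ) → ℝ} (hf : Measurable f) {C : ℝ} (hfC : ∀ ω, |f ω| ≤ C * ‖ω‖) :
    ContinuousOn (fun P => fapIntR P f) (couplings μ) := by
  obtain ⟨N, hCN⟩ := exists_nat_ge C
  refine continuousOn_fapIntR_of_abs_le_sum (w := fun _ x => N • ENNReal.ofReal |x|) hf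
    (fun _ => by fun_prop) (fun ω => ?_) fun P hP i => ?_
  · calc ENNReal.ofReal |f ω| ≤ ENNReal.ofReal (N * ‖ω‖) :=
          ENNReal.ofReal_le_ofReal ((hfC ω).trans (by gcongr))
      _ ≤ ∑ i, N • ENNReal.ofReal |ω i| := ofReal_mul_norm_le_sum N ω
  · have hmeas : Measurable fun ω : Fin n → ℝ => ENNReal.ofReal |ω i| := by fun_prop
    change fapIntTop P (N • fun ω => ENNReal.ofReal |ω i|) ≠ ⊤
    rw [fapIntTop_nsmul hP.1 hmeas, nsmul_eq_mul]
    exact ENNReal.mul_ne_top (ENNReal.natCast_ne_top N) (hfin P hP i).ne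

lemma abs_sub_mul_le_mul_norm {ι : Type*} [Fintype ι] (x : ι → ℝ) (i j : ι) {a C : ℝ}
    (ha : |a| ≤ C) : |(x j - x i) * a| ≤ 2 * C * ‖x‖ := by
  have hsub : |x j - x i| ≤ 2 * ‖x‖ :=
    calc |x j - x i| ≤ |x j| + |x i| := abs_sub _ _
      _ ≤ ‖x‖ + ‖x‖ := add_le_add (norm_le_pi_norm x j) (norm_le_pi_norm x i)
      _ = 2 * ‖x‖ := (two_mul _).symm
  calc |(x j - x i) * a| = |x j - x i| * |a| := abs_mul _ _
    _ ≤ 2 * ‖x‖ * C := by gcongr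
    _ = 2 * C * ‖x‖ := by ring

lemma isClosed_martingale_couplings (hn : 0 < n)
    (hfin : ∀ P ∈ couplings μ, ∀ i, fapIntTop P (fun ω => ENNReal.ofReal |ω i|) < ⊤) :
    IsClosed {P ∈ couplings μ | IsMartFAP hn P} := by
  refine isClosed_of_closure_subset fun P hP => ?_
  have hPcoup : P ∈ couplings μ :=
    closure_minimal (sep_subset _ _) (isClosed_couplings μ) hP
  have hPzero {f : (Fin n → ℝ) → ℝ} (hf : Measurable f) {C : ℝ} (hfC : ∀ ω, |f ω| ≤ C * ‖ω‖)
      (hmart : ∀ Q, IsMartFAP hn Q → fapIntR Q f = 0) : fapIntR P f = 0 := by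
    have hclosed : IsClosed (couplings μ ∩ (fun Q => fapIntR Q f) ⁻¹' {0}) :=
      (continuousOn_fapIntR_of_linear_growth hfin hf hfC).preimage_isClosed_of_isClosed
        (isClosed_couplings μ) isClosed_singleton
    have hsub : {Q ∈ couplings μ | IsMartFAP hn Q} ⊆
        couplings μ ∩ (fun Q => fapIntR Q f) ⁻¹' {0} :=
      fun Q hQ => ⟨hQ.1, hmart Q hQ.2⟩
    exact (closure_minimal hsub hclosed hP).2
  refine ⟨hPcoup, hfin P hPcoup, ?_, fun i j hij g hg ⟨C, hC⟩ hgi => ?_⟩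
  · refine hPzero (C := 1) (by fun_prop) (fun ω => ?_) fun Q hQ => hQ.2.1
    rw [one_mul]
    exact norm_le_pi_norm ω _
  · exact hPzero (by fun_prop) (fun ω => abs_sub_mul_le_mul_norm ω i j (hC ω))
      fun Q hQ => hQ.2.2 i j hij g hg ⟨C, hC⟩ hgi

end MartingaleCouplings

/-- on `Ω = ℝⁿ`, if `K₂ = {P ∈ M : (π_1,…,π_n) is a P-martingale}` is
nonempty, then `K₂` is compact and there is `P ∈ K₂` with `P(c) = inf_{Q ∈ K₂} Q(c)`. -/
theorem K2_compact_and_min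
    {n : ℕ} (hn : 0 < n) (μ : Fin n → Measure ℝ) [∀ i, IsProbabilityMeasure (μ i)]
    (c : (Fin n → ℝ) → ℝ≥0∞) (hc : Measurable c)
    (hne : ({P ∈ couplings μ | IsMartFAP hn P}).Nonempty) :
    IsCompact {P ∈ couplings μ | IsMartFAP hn P} ∧
      ∃ P ∈ {P ∈ couplings μ | IsMartFAP hn P},
        fapIntTop P c = ⨅ Q ∈ {P ∈ couplings μ | IsMartFAP hn P}, fapIntTop Q c := by
  have hclosed : IsClosed {P ∈ couplings μ | IsMartFAP hn P} := by
    obtain ⟨P₀, hP₀, hP₀fin, -, -⟩ := hne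
    refine isClosed_martingale_couplings hn fun P hP i => ?_
    have habs : Measurable fun x : ℝ => ENNReal.ofReal |x| := by fun_prop
    rw [fapIntTop_marginal_congr hP hP₀ i habs]
    exact hP₀fin i
  exact ⟨hclosed.isCompact,
    exists_fapIntTop_eq_iInf hclosed.isCompact hne
      (fun _ hP => couplings_subset_FAPs hP.1) hc⟩

end FATransport
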